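/- Let δ > 0, c_A > 0, c_B > 0, and let (V, W) be a pair of real random variables with P(V > 0) = P(W > 0) = 1 and with joint distribution function P(V ≤ y₁, W ≤ y₂) = F(y₁, y₂) for all y₁, y₂ > 0, where F is the Hüsler–Reiss bivariate distribution function with parameter δ. Then lim_{x→∞} P(W > c_B x | V > c_A x) = Φ̄( log(c_B/c_A)/(2√δ) + √δ ) + (c_A/c_B) Φ̄( log(c_A/c_B)/(2√δ) + √δ ), where Φ̄ = 1 − Φ and Φ is the standard normal cumulative distribution function. -/

import Mathlib

/-!
Write the Hüsler–Reiss distribution as `F = exp (-Λ)`, where the exponent function `Λ` is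
homogeneous of degree `-1` and `Λ(y, z) → 1 / y` as `z → ∞`. Letting `z → ∞` in `F(y, z)` shows
that both margins are unit Fréchet, `y ↦ exp (-1 / y)`. As `x * (1 - exp (-k / x)) → k`, the events
`W > c_B x`, `V > c_A x` and their union have probabilities asymptotic to `c_B⁻¹ / x`, `c_A⁻¹ / x`
and `Λ(c_B, c_A) / x`, and inclusion–exclusion gives the conditional probability of the first given
the second the limit `(c_B⁻¹ + c_A⁻¹ - Λ(c_B, c_A)) / c_A⁻¹`.
-/

open MeasureTheory Filter Real

/-- The standard normal cumulative distribution function. -/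
noncomputable def stdNormalCDF (x : ℝ) : ℝ :=
  (Real.sqrt (2 * Real.pi))⁻¹ * ∫ t in Set.Iic x, Real.exp (-t ^ 2 / 2)

/-- `Φ̄ = 1 - Φ`. -/
noncomputable def stdNormalTail (x : ℝ) : ℝ := 1 - stdNormalCDF x

/-- The Hüsler–Reiss bivariate distribution function with parameter `δ`. -/
noncomputable def huslerReiss (δ y₁ y₂ : ℝ) : ℝ :=
  Real.exp
    (-(1 / y₁) * stdNormalCDF (Real.log (y₂ / y₁) / (2 * Real.sqrt δ) + Real.sqrt δ)
      - (1 / y₂) * stdNormalCDF (Real.log (y₁ / y₂) / (2 * Real.sqrt δ) + Real.sqrt δ))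

open ProbabilityTheory Topology

theorem stdNormalCDF_eq_cdf_gaussianReal (x : ℝ) :
    stdNormalCDF x = cdf (gaussianReal 0 1) x := by
  rw [cdf_eq_real, measureReal_def, gaussianReal_apply_eq_integral 0 one_ne_zero,
    ENNReal.toReal_ofReal (integral_nonneg fun t ↦ gaussianPDFReal_nonneg 0 1 t), stdNormalCDF,
    ← integral_const_mul]
  simp [gaussianPDFReal]

theorem stdNormalCDF_nonneg (x : ℝ) : 0 ≤ stdNormalCDF x :=
  stdNormalCDF_eq_cdf_gaussianReal x ▸ cdf_nonneg _ x

theorem stdNormalCDF_le_one (x : ℝ) : stdNormalCDF x ≤ 1 :=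
  stdNormalCDF_eq_cdf_gaussianReal x ▸ cdf_le_one _ x

theorem tendsto_stdNormalCDF_atTop : Tendsto stdNormalCDF atTop (𝓝 1) :=
  (tendsto_cdf_atTop (gaussianReal 0 1)).congr fun x ↦ (stdNormalCDF_eq_cdf_gaussianReal x).symm

theorem tendsto_mul_one_sub_exp_neg_div_atTop (k : ℝ) :
    Tendsto (fun x ↦ x * (1 - exp (-(k / x)))) atTop (𝓝 k) := by
  have hderiv : HasDerivAt (fun t ↦ 1 - exp (-(k * t))) k 0 := by
    simpa using ((hasDerivAt_id (0 : ℝ)).const_mul k).neg.exp.const_sub 1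
  have hslope := hderiv.tendsto_slope_zero_right.comp tendsto_inv_atTop_nhdsGT_zero
  simpa [Function.comp_def, div_eq_mul_inv] using hslope

section FiniteMeasure

variable {Ω : Type*} [MeasurableSpace Ω] {P : Measure Ω} [IsFiniteMeasure P]

theorem tendsto_measureReal_inter_le_atTop (s : Set Ω) (W : Ω → ℝ) :
    Tendsto (fun z ↦ P.real (s ∩ {ω | W ω ≤ z})) atTop (𝓝 (P.real s)) := by
  have hmono : Monotone fun z ↦ s ∩ {ω | W ω ≤ z} :=
    fun _ _ hzz' _ hω ↦ ⟨hω.1, hω.2.trans hzz'⟩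
  have hunion : ⋃ z, s ∩ {ω | W ω ≤ z} = s := by
    rw [← Set.inter_iUnion, Set.inter_eq_left]
    exact fun ω _ ↦ Set.mem_iUnion.2 ⟨W ω, le_refl (W ω)⟩
  have hlim := tendsto_measure_iUnion_atTop (μ := P) hmono
  rw [hunion] at hlim
  exact (ENNReal.tendsto_toReal (measure_ne_top P s)).comp hlim

theorem tendsto_measureReal_inter_div {ι : Type*} {l : Filter ι} {r : ι → ℝ} {s t : ι → Set Ω}
    {α β γ : ℝ} (ht : ∀ i, MeasurableSet (t i))
    (hα : Tendsto (fun i ↦ r i * P.real (s i)) l (𝓝 α))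
    (hβ : Tendsto (fun i ↦ r i * P.real (t i)) l (𝓝 β))
    (hγ : Tendsto (fun i ↦ r i * P.real (s i ∪ t i)) l (𝓝 γ)) (hβ₀ : β ≠ 0) :
    Tendsto (fun i ↦ P.real (s i ∩ t i) / P.real (t i)) l (𝓝 ((α + β - γ) / β)) := by
  refine (((hα.add hβ).sub hγ).div hβ hβ₀).congr' ?_
  filter_upwards [hβ.eventually_ne hβ₀] with i hi
  have hinter : P.real (s i ∩ t i) = P.real (s i) + P.real (t i) - P.real (s i ∪ t i) :=
    eq_sub_of_add_eq' (measureReal_union_add_inter (ht i))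
  rw [Pi.div_apply, ← mul_add, ← mul_sub, ← hinter, mul_div_mul_left _ _ (left_ne_zero_of_mul hi)]

end FiniteMeasure

/-- The exponent function `Λ` of the Hüsler–Reiss distribution `exp (-Λ)`, known in extreme value
theory as its exponent measure function. -/
noncomputable def huslerReissExponent (δ y₁ y₂ : ℝ) : ℝ :=
  1 / y₁ * stdNormalCDF (log (y₂ / y₁) / (2 * √δ) + √δ) +
    1 / y₂ * stdNormalCDF (log (y₁ / y₂) / (2 * √δ) + √δ)

theorem huslerReiss_eq_exp_neg_exponent (δ y₁ y₂ : ℝ) :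
    huslerReiss δ y₁ y₂ = exp (-huslerReissExponent δ y₁ y₂) := by
  rw [huslerReiss, huslerReissExponent, neg_add, neg_mul, sub_eq_add_neg]

theorem huslerReissExponent_comm (δ y₁ y₂ : ℝ) :
    huslerReissExponent δ y₁ y₂ = huslerReissExponent δ y₂ y₁ :=
  add_comm _ _

theorem huslerReissExponent_mul_right (δ y₁ y₂ : ℝ) {t : ℝ} (ht : t ≠ 0) :
    huslerReissExponent δ (y₁ * t) (y₂ * t) = huslerReissExponent δ y₁ y₂ / t := by
  simp only [huslerReissExponent, mul_div_mul_right _ _ ht]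
  ring

theorem tendsto_huslerReissExponent_atTop {δ y : ℝ} (hδ : 0 < δ) (hy : 0 < y) :
    Tendsto (huslerReissExponent δ y) atTop (𝓝 (1 / y)) := by
  have harg : Tendsto (fun z ↦ log (z / y) / (2 * √δ) + √δ) atTop atTop :=
    tendsto_atTop_add_const_right _ _ <|
      (tendsto_log_atTop.comp (tendsto_id.atTop_div_const hy)).atTop_div_const (by positivity)
  have hleft := (tendsto_stdNormalCDF_atTop.comp harg).const_mul (1 / y)
  have hright : Tendsto (fun z ↦ 1 / z * stdNormalCDF (log (y / z) / (2 * √δ) + √δ))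
      atTop (𝓝 0) := by
    have hinv : Tendsto (fun z : ℝ ↦ 1 / z) atTop (𝓝 0) := tendsto_const_nhds.div_atTop tendsto_id
    refine squeeze_zero' ?_ ?_ hinv
    · filter_upwards [eventually_gt_atTop 0] with z hz
      exact mul_nonneg (by positivity) (stdNormalCDF_nonneg _)
    · filter_upwards [eventually_gt_atTop 0] with z hz
      exact mul_le_of_le_one_right (by positivity) (stdNormalCDF_le_one _)
  rw [← add_zero (1 / y), ← mul_one (1 / y)]
  exact hleft.add hright

theorem one_div_add_one_div_sub_huslerReissExponent_div (δ b : ℝ) {a : ℝ} (ha : a ≠ 0) :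
    (1 / b + 1 / a - huslerReissExponent δ b a) / (1 / a) =
      stdNormalTail (log (b / a) / (2 * √δ) + √δ) +
        a / b * stdNormalTail (log (a / b) / (2 * √δ) + √δ) := by
  rw [huslerReissExponent, stdNormalTail, stdNormalTail]
  field_simp
  ring

/-- The pair `(V, W)` has the Hüsler–Reiss joint distribution function on `(0, ∞)²`; no condition is
imposed at the other points of the plane. -/
def IsHuslerReissPair {Ω : Type*} [MeasurableSpace Ω] (P : Measure Ω) (V W : Ω → ℝ) (δ : ℝ) :
    Prop :=
  ∀ y₁ y₂ : ℝ, 0 < y₁ → 0 < y₂ → P.real {ω | V ω ≤ y₁ ∧ W ω ≤ y₂} = huslerReiss δ y₁ y₂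

namespace IsHuslerReissPair

variable {Ω : Type*} [MeasurableSpace Ω] {P : Measure Ω} {V W : Ω → ℝ} {δ : ℝ}

theorem swap (h : IsHuslerReissPair P V W δ) : IsHuslerReissPair P W V δ := by
  intro y₁ y₂ hy₁ hy₂
  simp only [and_comm, h y₂ y₁ hy₂ hy₁, huslerReiss_eq_exp_neg_exponent,
    huslerReissExponent_comm δ y₂ y₁]

theorem measureReal_le_eq_exp [IsFiniteMeasure P] (h : IsHuslerReissPair P V W δ) (hδ : 0 < δ)
    {y : ℝ} (hy : 0 < y) : P.real {ω | V ω ≤ y} = exp (-(1 / y)) := by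
  have hlim := (continuous_exp.tendsto _).comp (tendsto_huslerReissExponent_atTop hδ hy).neg
  refine tendsto_nhds_unique (tendsto_measureReal_inter_le_atTop _ W) (hlim.congr' ?_)
  filter_upwards [eventually_gt_atTop 0] with z hz
  exact (huslerReiss_eq_exp_neg_exponent δ y z).symm.trans (h y z hy hz).symm

variable [IsProbabilityMeasure P]

theorem measureReal_gt_eq_one_sub_exp (h : IsHuslerReissPair P V W δ) (hV : Measurable V)
    (hδ : 0 < δ) {y : ℝ} (hy : 0 < y) : P.real {ω | y < V ω} = 1 - exp (-(1 / y)) := by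
  rw [← h.measureReal_le_eq_exp hδ hy,
    ← probReal_compl_eq_one_sub (measurableSet_le hV measurable_const)]
  simp only [Set.compl_ofPred, not_le]

theorem measureReal_gt_union_gt (h : IsHuslerReissPair P V W δ) (hV : Measurable V)
    (hW : Measurable W) {a b : ℝ} (ha : 0 < a) (hb : 0 < b) :
    P.real ({ω | a < V ω} ∪ {ω | b < W ω}) = 1 - huslerReiss δ a b := by
  have hmeas : MeasurableSet {ω | V ω ≤ a ∧ W ω ≤ b} :=
    (measurableSet_le hV measurable_const).inter (measurableSet_le hW measurable_const)
  rw [← h a b ha hb, ← probReal_compl_eq_one_sub hmeas]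
  simp only [Set.compl_ofPred, not_and_or, not_le, Set.ofPred_or]

theorem tendsto_mul_measureReal_gt (h : IsHuslerReissPair P V W δ) (hV : Measurable V)
    (hδ : 0 < δ) {a : ℝ} (ha : 0 < a) :
    Tendsto (fun x ↦ x * P.real {ω | a * x < V ω}) atTop (𝓝 (1 / a)) := by
  refine (tendsto_mul_one_sub_exp_neg_div_atTop (1 / a)).congr' ?_
  filter_upwards [eventually_gt_atTop 0] with x hx
  rw [h.measureReal_gt_eq_one_sub_exp hV hδ (mul_pos ha hx), div_div]

theorem tendsto_mul_measureReal_gt_union_gt (h : IsHuslerReissPair P V W δ) (hV : Measurable V)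
    (hW : Measurable W) {a b : ℝ} (ha : 0 < a) (hb : 0 < b) :
    Tendsto (fun x ↦ x * P.real ({ω | a * x < V ω} ∪ {ω | b * x < W ω})) atTop
      (𝓝 (huslerReissExponent δ a b)) := by
  refine (tendsto_mul_one_sub_exp_neg_div_atTop _).congr' ?_
  filter_upwards [eventually_gt_atTop 0] with x hx
  rw [h.measureReal_gt_union_gt hV hW (mul_pos ha hx) (mul_pos hb hx),
    huslerReiss_eq_exp_neg_exponent, huslerReissExponent_mul_right δ a b hx.ne']

end IsHuslerReissPair

/-- If `(V, W)` is a pair of a.s. positive random variables whose joint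
distribution function on `(0,∞)²` is the Hüsler–Reiss distribution with parameter `δ`, then
`lim_{x→∞} P(W > c_B x | V > c_A x)
  = Φ̄(log(c_B/c_A)/(2√δ) + √δ) + (c_A/c_B) Φ̄(log(c_A/c_B)/(2√δ) + √δ)`. -/
theorem statement_13
    {Ω : Type*} [MeasurableSpace Ω] (P : Measure Ω) [IsProbabilityMeasure P]
    (V W : Ω → ℝ) (hV : Measurable V) (hW : Measurable W)
    (hVpos : P {ω | 0 < V ω} = 1) (hWpos : P {ω | 0 < W ω} = 1)
    (δ cA cB : ℝ) (hδ : 0 < δ) (hcA : 0 < cA) (hcB : 0 < cB)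
    (hjoint : ∀ y₁ y₂ : ℝ, 0 < y₁ → 0 < y₂ →
      (P {ω | V ω ≤ y₁ ∧ W ω ≤ y₂}).toReal = huslerReiss δ y₁ y₂) :
    Tendsto
      (fun x : ℝ =>
        (P {ω | cB * x < W ω ∧ cA * x < V ω}).toReal / (P {ω | cA * x < V ω}).toReal)
      atTop
      (nhds
        (stdNormalTail (Real.log (cB / cA) / (2 * Real.sqrt δ) + Real.sqrt δ)
          + (cA / cB) * stdNormalTail (Real.log (cA / cB) / (2 * Real.sqrt δ) + Real.sqrt δ))) := by
  have hVW : IsHuslerReissPair P V W δ := hjoint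
  rw [← one_div_add_one_div_sub_huslerReissExponent_div δ cB hcA.ne']
  exact tendsto_measureReal_inter_div
    (fun _ ↦ measurableSet_lt measurable_const hV)
    (hVW.swap.tendsto_mul_measureReal_gt hW hδ hcB)
    (hVW.tendsto_mul_measureReal_gt hV hδ hcA)
    (hVW.swap.tendsto_mul_measureReal_gt_union_gt hW hV hcB hcA)
    (one_div_ne_zero hcA.ne')
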